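/- Let C be a category with pullbacks which has Kähler differentials, and let X be a formally unramified object of C. Then Ω_X is a zero object of Ab(C/X); in particular Ω_X is isomorphic in Ab(C/X) to the trivial Beck module id_X: X → X. -/

import Mathlib

open CategoryTheory CategoryTheory.Limits

universe v u

/-- A Beck module over `Y`: an abelian group object in the overcategory `C/Y`,
presented by its underlying morphism `φ : M ⟶ Y`, a unit (zero) section `unit`,
an addition `add` over `Y`, and a negation `neg` over `Y`, satisfying the abelian
group axioms on generalized elements (equivalently, via Yoneda, making it an
abelian group object of `C/Y`). -/
structure BeckModule {C : Type u} [Category.{v} C] [HasPullbacks C] (Y : C) where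
  M : C
  φ : M ⟶ Y
  unit : Y ⟶ M
  unit_φ : unit ≫ φ = 𝟙 Y
  add : pullback φ φ ⟶ M
  add_φ : add ≫ φ = pullback.fst φ φ ≫ φ
  neg : M ⟶ M
  neg_φ : neg ≫ φ = φ
  add_assoc : ∀ {T : C} (a b c : T ⟶ M) (hab : a ≫ φ = b ≫ φ) (hbc : b ≫ φ = c ≫ φ),
    pullback.lift (pullback.lift a b hab ≫ add) c
        (by rw [Category.assoc, add_φ, ← Category.assoc, pullback.lift_fst, hab, hbc]) ≫ add =
      pullback.lift a (pullback.lift b c hbc ≫ add)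
        (by rw [Category.assoc, add_φ, ← Category.assoc, pullback.lift_fst, hab]) ≫ add
  add_comm : ∀ {T : C} (a b : T ⟶ M) (h : a ≫ φ = b ≫ φ),
    pullback.lift a b h ≫ add = pullback.lift b a h.symm ≫ add
  zero_add : ∀ {T : C} (a : T ⟶ M),
    pullback.lift (a ≫ φ ≫ unit) a
        (by rw [Category.assoc, Category.assoc, unit_φ, Category.comp_id]) ≫ add = a
  add_neg : ∀ {T : C} (a : T ⟶ M),
    pullback.lift a (a ≫ neg) (by rw [Category.assoc, neg_φ]) ≫ add = a ≫ φ ≫ unit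

/-- A Beck torsor structure on `γ : Z ⟶ Y`: `γ` is an effective epimorphism, equipped
with a Beck module `mod` over `Y` and a group action `τ : M ×_Y Z ⟶ Z` in `C/Y`
(satisfying the unit and associativity axioms for an action of the group object `M`),
such that the shear morphism `(τ, π_Z) : M ×_Y Z ⟶ Z ×_Y Z` is an isomorphism in `C/Y`. -/
structure BeckTorsor {C : Type u} [Category.{v} C] [HasPullbacks C] {Z Y : C} (γ : Z ⟶ Y) where
  mod : BeckModule Y
  effEpi : EffectiveEpi γ
  τ : pullback mod.φ γ ⟶ Z
  τ_γ : τ ≫ γ = pullback.snd mod.φ γ ≫ γ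
  act_unit : ∀ {T : C} (z : T ⟶ Z),
    pullback.lift (z ≫ γ ≫ mod.unit) z
        (by rw [Category.assoc, Category.assoc, mod.unit_φ, Category.comp_id]) ≫ τ = z
  act_assoc : ∀ {T : C} (a b : T ⟶ mod.M) (z : T ⟶ Z)
      (hab : a ≫ mod.φ = b ≫ mod.φ) (hbz : b ≫ mod.φ = z ≫ γ),
    pullback.lift (pullback.lift a b hab ≫ mod.add) z
        (by rw [Category.assoc, mod.add_φ, ← Category.assoc, pullback.lift_fst, hab, hbz]) ≫ τ =
      pullback.lift a (pullback.lift b z hbz ≫ τ)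
        (by rw [Category.assoc, τ_γ, ← Category.assoc, pullback.lift_snd, hab, hbz]) ≫ τ
  shear_iso : IsIso (pullback.lift τ (pullback.snd mod.φ γ) τ_γ :
    pullback mod.φ γ ⟶ pullback γ γ)

/-- An object `X` is formally unramified if, for every Beck torsor `γ : Z ⟶ Y` in `C`,
the canonical map `Hom(X, Z) → Hom(X, Y)` given by composition with `γ` is injective. -/
def FormallyUnramified {C : Type u} [Category.{v} C] [HasPullbacks C] (X : C) : Prop :=
  ∀ ⦃Z Y : C⦄ (γ : Z ⟶ Y), BeckTorsor γ →
    Function.Injective (fun ψ : X ⟶ Z => ψ ≫ γ)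

/-- A morphism of Beck modules over `Y`: a morphism over `Y` commuting with the
addition (i.e. a morphism of abelian group objects in `C/Y`). -/
@[ext]
structure BeckModuleHom {C : Type u} [Category.{v} C] [HasPullbacks C] {Y : C}
    (N₁ N₂ : BeckModule Y) where
  f : N₁.M ⟶ N₂.M
  w : f ≫ N₂.φ = N₁.φ
  map_add : ∀ {T : C} (a b : T ⟶ N₁.M) (h : a ≫ N₁.φ = b ≫ N₁.φ),
    (pullback.lift a b h ≫ N₁.add) ≫ f =
      pullback.lift (a ≫ f) (b ≫ f)
        (by rw [Category.assoc, Category.assoc, w, h]) ≫ N₂.add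

/-- The category `Ab(C/Y)` of Beck modules over `Y`. -/
instance BeckModule.category {C : Type u} [Category.{v} C] [HasPullbacks C] (Y : C) :
    Category (BeckModule Y) where
  Hom := BeckModuleHom
  id N := ⟨𝟙 N.M, Category.id_comp _, by intro T a b h; simp⟩
  comp {N₁ N₂ N₃} f g := ⟨f.f ≫ g.f, by rw [Category.assoc, g.w, f.w], by
    intro T a b h
    rw [← Category.assoc, f.map_add, g.map_add]
    simp⟩
  id_comp f := by apply BeckModuleHom.ext; simp
  comp_id f := by apply BeckModuleHom.ext; simp
  assoc f g h := by apply BeckModuleHom.ext; simp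

/-- The forgetful functor `Ab(C/Y) ⥤ C/Y`. -/
def forgetBeck {C : Type u} [Category.{v} C] [HasPullbacks C] (Y : C) :
    BeckModule Y ⥤ Over Y where
  obj N := Over.mk N.φ
  map {N₁ N₂} f := Over.homMk f.f f.w
  map_id N := by ext; simp; rfl
  map_comp f g := by ext; simp; rfl

/-- The identity morphism `𝟙 X`, equipped with its unique structure of an abelian
group object in `C/X` (the trivial Beck module over `X`). -/
noncomputable def idBeckModule {C : Type u} [Category.{v} C] [HasPullbacks C] (X : C) : BeckModule X where
  M := X
  φ := 𝟙 X
  unit := 𝟙 X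
  unit_φ := by simp
  add := pullback.fst (𝟙 X) (𝟙 X)
  add_φ := by simp
  neg := 𝟙 X
  neg_φ := by simp
  add_assoc := by
    intros
    exact (pullback.lift_fst _ _ _).trans
      ((pullback.lift_fst _ _ _).trans (pullback.lift_fst _ _ _).symm)
  add_comm := by
    intro T a b h
    simp only [pullback.lift_fst]
    simpa using h
  zero_add := by
    intro T a
    have h : a ≫ 𝟙 X ≫ 𝟙 X = a := by simp
    exact (pullback.lift_fst _ _ _).trans h
  add_neg := by
    intro T a
    have h : a = a ≫ 𝟙 X ≫ 𝟙 X := by simp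
    exact (pullback.lift_fst _ _ _).trans h

/-- Addition of generalized elements, with an arbitrary pair of equal arguments. -/
theorem BeckModule.lift_congr {C : Type u} [Category.{v} C] [HasPullbacks C] {Y : C}
    (N : BeckModule Y) {T : C} {a b a' b' : T ⟶ N.M} (h : a ≫ N.φ = b ≫ N.φ)
    (h' : a' ≫ N.φ = b' ≫ N.φ) (ha : a = a') (hb : b = b') :
    pullback.lift a b h ≫ N.add = pullback.lift a' b' h' ≫ N.add := by
  subst ha hb; rfl

theorem BeckModule.lift_add_φ {C : Type u} [Category.{v} C] [HasPullbacks C] {Y : C}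
    (N : BeckModule Y) {T : C} (a b : T ⟶ N.M) (h : a ≫ N.φ = b ≫ N.φ) :
    (pullback.lift a b h ≫ N.add) ≫ N.φ = a ≫ N.φ := by
  rw [Category.assoc, N.add_φ, pullback.lift_fst_assoc]

theorem BeckModule.add_zero' {C : Type u} [Category.{v} C] [HasPullbacks C] {Y : C}
    (N : BeckModule Y) {T : C} (a : T ⟶ N.M) (h) :
    pullback.lift a (a ≫ N.φ ≫ N.unit) h ≫ N.add = a := by
  rw [N.add_comm]; exact N.zero_add a

theorem BeckModule.add_sub {C : Type u} [Category.{v} C] [HasPullbacks C] {Y : C}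
    (N : BeckModule Y) {T : C} (a b : T ⟶ N.M) (h : a ≫ N.φ = b ≫ N.φ)
    (h' : b ≫ N.φ = (b ≫ N.neg) ≫ N.φ) (h'') :
    pullback.lift (pullback.lift a b h ≫ N.add) (b ≫ N.neg) h'' ≫ N.add = a := by
  rw [N.add_assoc a b (b ≫ N.neg) h h']
  refine Eq.trans (N.lift_congr _ (by simp [N.unit_φ]) rfl ?_) (N.add_zero' a (by simp [N.unit_φ]))
  rw [N.add_neg, ← Category.assoc, ← h, Category.assoc]

theorem BeckModule.sub_add {C : Type u} [Category.{v} C] [HasPullbacks C] {Y : C}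
    (N : BeckModule Y) {T : C} (a b : T ⟶ N.M) (h : a ≫ N.φ = (b ≫ N.neg) ≫ N.φ)
    (h' : (b ≫ N.neg) ≫ N.φ = b ≫ N.φ) (h'') :
    pullback.lift (pullback.lift a (b ≫ N.neg) h ≫ N.add) b h'' ≫ N.add = a := by
  rw [N.add_assoc a (b ≫ N.neg) b h h']
  refine Eq.trans (N.lift_congr _ (by simp [N.unit_φ]) rfl ?_) (N.add_zero' a (by simp [N.unit_φ]))
  rw [N.add_comm, N.add_neg, ← Category.assoc, ← h', ← h, Category.assoc]

theorem BeckModule.shear_isIso {C : Type u} [Category.{v} C] [HasPullbacks C] {Y : C}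
    (N : BeckModule Y) (h : N.add ≫ N.φ = pullback.snd N.φ N.φ ≫ N.φ) :
    IsIso (pullback.lift N.add (pullback.snd N.φ N.φ) h) := by
  have hn : pullback.fst N.φ N.φ ≫ N.φ = (pullback.snd N.φ N.φ ≫ N.neg) ≫ N.φ := by
    rw [Category.assoc, N.neg_φ, pullback.condition]
  have hs : (pullback.lift (pullback.fst N.φ N.φ) (pullback.snd N.φ N.φ ≫ N.neg) hn ≫ N.add) ≫ N.φ
      = pullback.snd N.φ N.φ ≫ N.φ := by
    rw [N.lift_add_φ, pullback.condition]
  have hid : pullback.lift (pullback.fst N.φ N.φ) (pullback.snd N.φ N.φ) pullback.condition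
      = 𝟙 (pullback N.φ N.φ) := by
    apply pullback.hom_ext <;> simp
  refine ⟨pullback.lift _ (pullback.snd N.φ N.φ) hs, ?_, ?_⟩
  · apply pullback.hom_ext
    · rw [Category.assoc, pullback.lift_fst, Category.id_comp, ← Category.assoc]
      refine Eq.trans ?_ (N.add_sub (pullback.fst N.φ N.φ) (pullback.snd N.φ N.φ)
        pullback.condition (by rw [Category.assoc, N.neg_φ])
        (by rw [N.lift_add_φ, hn]))
      congr 1
      apply pullback.hom_ext
      · rw [Category.assoc, pullback.lift_fst, pullback.lift_fst, pullback.lift_fst, hid,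
          Category.id_comp]
      · rw [Category.assoc, pullback.lift_snd, pullback.lift_snd, pullback.lift_snd_assoc]
    · rw [Category.assoc, pullback.lift_snd, pullback.lift_snd, Category.id_comp]
  · apply pullback.hom_ext
    · rw [Category.assoc, pullback.lift_fst, Category.id_comp]
      exact N.sub_add _ _ hn (by rw [Category.assoc, N.neg_φ]) hs
    · rw [Category.assoc, pullback.lift_snd, pullback.lift_snd, Category.id_comp]

/-- A Beck module is a torsor over itself. -/
noncomputable def BeckModule.selfTorsor {C : Type u} [Category.{v} C] [HasPullbacks C] {Y : C}
    (N : BeckModule Y) : BeckTorsor N.φ where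
  mod := N
  effEpi := by
    have : IsSplitEpi N.φ := IsSplitEpi.mk' ⟨N.unit, N.unit_φ⟩
    infer_instance
  τ := N.add
  τ_γ := by rw [N.add_φ, pullback.condition]
  act_unit z := N.zero_add z
  act_assoc a b z hab hbz := N.add_assoc a b z hab hbz
  shear_iso := N.shear_isIso _

theorem BeckModule.section_eq {C : Type u} [Category.{v} C] [HasPullbacks C] {X : C}
    (hX : FormallyUnramified X) (N : BeckModule X) {s t : X ⟶ N.M}
    (hs : s ≫ N.φ = 𝟙 X) (ht : t ≫ N.φ = 𝟙 X) : s = t :=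
  hX N.φ N.selfTorsor (hs.trans ht.symm)

theorem BeckModule.unit_add {C : Type u} [Category.{v} C] [HasPullbacks C] {X : C}
    (N : BeckModule X) {T : C} (a : T ⟶ X) :
    a ≫ N.unit = pullback.lift (a ≫ N.unit) (a ≫ N.unit) rfl ≫ N.add := by
  refine (N.zero_add (a ≫ N.unit)).symm.trans (N.lift_congr _ _ ?_ rfl)
  rw [Category.assoc, reassoc_of% N.unit_φ]

/-- The zero morphism from the trivial module. -/
noncomputable def BeckModule.fromId {C : Type u} [Category.{v} C] [HasPullbacks C] {X : C}
    (N : BeckModule X) : idBeckModule X ⟶ N :=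
  BeckModuleHom.mk (N₁ := idBeckModule X) (N₂ := N) N.unit N.unit_φ (by
    intro T a b h
    have hab : a = b := (Category.comp_id a).symm.trans (h.trans (Category.comp_id b))
    subst hab
    refine Eq.trans (congrArg (· ≫ N.unit) (pullback.lift_fst _ _ _)) ?_
    exact N.unit_add a)

/-- The zero morphism to the trivial module. -/
noncomputable def BeckModule.toId {C : Type u} [Category.{v} C] [HasPullbacks C] {X : C}
    (N : BeckModule X) : N ⟶ idBeckModule X :=
  BeckModuleHom.mk (N₁ := N) (N₂ := idBeckModule X) N.φ (Category.comp_id _) (by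
    intro T a b h
    exact (N.lift_add_φ a b h).trans (pullback.lift_fst _ _ _).symm)

theorem isZero_idBeckModule {C : Type u} [Category.{v} C] [HasPullbacks C] {X : C}
    (hX : FormallyUnramified X) : IsZero (idBeckModule X) where
  unique_to N := ⟨⟨⟨N.fromId⟩, fun g => BeckModuleHom.ext
    (N.section_eq hX (BeckModuleHom.w g) N.unit_φ)⟩⟩
  unique_from N := ⟨⟨⟨N.toId⟩, fun g => BeckModuleHom.ext
    ((Category.comp_id _).symm.trans (BeckModuleHom.w g))⟩⟩

/-- If `C` has Kähler differentials and `X` is formally unramified, then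
`Ω_X = Ω(𝟙 X)` is a zero object of `Ab(C/X)`; in particular `Ω_X` is isomorphic in
`Ab(C/X)` to the trivial Beck module `𝟙 X : X ⟶ X`. -/
theorem isZero_kaehler_of_formallyUnramified {C : Type u} [Category.{v} C]
    [HasPullbacks C] (Ω : ∀ Y : C, Over Y ⥤ BeckModule Y)
    (adj : ∀ Y : C, Ω Y ⊣ forgetBeck Y) (X : C) (hX : FormallyUnramified X) :
    IsZero ((Ω X).obj (Over.mk (𝟙 X))) ∧
      Nonempty ((Ω X).obj (Over.mk (𝟙 X)) ≅ idBeckModule X) := by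
  have hz := isZero_idBeckModule hX
  have key : ∀ (N : BeckModule X) (f g : (Ω X).obj (Over.mk (𝟙 X)) ⟶ N), f = g := by
    intro N f g
    apply ((adj X).homEquiv _ _).injective
    apply Over.OverMorphism.ext
    exact N.section_eq hX (Over.w ((adj X).homEquiv _ _ f)) (Over.w ((adj X).homEquiv _ _ g))
  let e : (Ω X).obj (Over.mk (𝟙 X)) ≅ idBeckModule X :=
    ⟨BeckModule.toId _, BeckModule.fromId _, key _ _ _, hz.eq_of_src _ _⟩
  exact ⟨hz.of_iso e, ⟨e⟩⟩
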